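/- There exists κ ≥ 1 with the following property: for every r > 0, every ε ∈ (0, 1/16], and every continuously differentiable function f on the closed ball B̄_r ⊆ ℝ³, sup_{s ∈ [(1−ε)r, r]} ∫_{∂B_s} f² dσ ≤ κ·( ∫_{∂B_r} f² dσ + ε·r·∫_{B_r} |∇f|² dx ). -/

import Mathlib

open MeasureTheory Metric

noncomputable section

abbrev E3 := EuclideanSpace ℝ (Fin 3)

def chP (i : Fin 3) (c : ℝ) (u : Fin 2 → ℝ) : E3 := WithLp.toLp 2 (i.insertNth (α := fun _ => ℝ) c u)

def chN (i : Fin 3) (c : ℝ) (u : Fin 2 → ℝ) : E3 := ‖chP i c u‖⁻¹ • chP i c u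

lemma norm_normalize_sub {x y : E3} (hx : 1 ≤ ‖x‖) (hy : 1 ≤ ‖y‖) :
    ‖‖x‖⁻¹ • x - ‖y‖⁻¹ • y‖ ≤ 2 * ‖x - y‖ := by
  have hx0 : 0 < ‖x‖ := by linarith
  have hy0 : 0 < ‖y‖ := by linarith
  have e : ‖x‖⁻¹ • x - ‖y‖⁻¹ • y = ‖x‖⁻¹ • (x - y) + (‖x‖⁻¹ - ‖y‖⁻¹) • y := by module
  rw [e]
  refine (norm_add_le _ _).trans ?_
  rw [norm_smul, norm_smul, norm_inv, norm_norm]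
  have h1 : ‖x‖⁻¹ * ‖x - y‖ ≤ ‖x - y‖ := by
    have : ‖x‖⁻¹ ≤ 1 := inv_le_one_of_one_le₀ hx
    nlinarith [norm_nonneg (x - y)]
  have h2 : ‖‖x‖⁻¹ - ‖y‖⁻¹‖ * ‖y‖ = ‖x‖⁻¹ * |‖y‖ - ‖x‖| := by
    have : ‖x‖⁻¹ - ‖y‖⁻¹ = ‖x‖⁻¹ * ‖y‖⁻¹ * (‖y‖ - ‖x‖) := by field_simp
    rw [this, Real.norm_eq_abs, abs_mul, abs_of_pos (by positivity)]
    field_simp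
  have h3 : |‖y‖ - ‖x‖| ≤ ‖x - y‖ := by
    rw [norm_sub_rev]; exact abs_norm_sub_norm_le y x
  rw [h2]
  have : ‖x‖⁻¹ ≤ 1 := inv_le_one_of_one_le₀ hx
  have := abs_nonneg (‖y‖ - ‖x‖)
  nlinarith

lemma chP_norm (i : Fin 3) (c : ℝ) (hc : c = 1 ∨ c = -1) (u : Fin 2 → ℝ) : 1 ≤ ‖chP i c u‖ := by
  have := PiLp.norm_apply_le (chP i c u) i
  rcases hc with rfl | rfl <;> simpa [chP] using this

lemma chP_sub (i : Fin 3) (c : ℝ) (u v : Fin 2 → ℝ) : ‖chP i c u - chP i c v‖ ≤ 2 * ‖u - v‖ := by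
  rw [EuclideanSpace.norm_eq]
  apply Real.sqrt_le_iff.2 ⟨by positivity, ?_⟩
  rw [Fin.sum_univ_succAbove _ i]
  simp [chP]
  have h0 := norm_le_pi_norm (u - v) 0
  have h1 := norm_le_pi_norm (u - v) 1
  simp only [Pi.sub_apply, Real.norm_eq_abs] at h0 h1
  rw [← sq_abs (u 0 - v 0), ← sq_abs (u 1 - v 1)]
  nlinarith [abs_nonneg (u 0 - v 0), abs_nonneg (u 1 - v 1)]

lemma chN_lip (i : Fin 3) (c : ℝ) (hc : c = 1 ∨ c = -1) : LipschitzWith 4 (chN i c) := by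
  apply LipschitzWith.of_dist_le_mul
  intro u v
  rw [dist_eq_norm, dist_eq_norm]
  have := norm_normalize_sub (chP_norm i c hc u) (chP_norm i c hc v)
  have := chP_sub i c u v
  simp only [chN, NNReal.coe_ofNat]
  linarith

lemma chN_proj (i : Fin 3) (c : ℝ) (hc : c = 1 ∨ c = -1) (x : E3) (hx : 0 < c * x i) :
    chN i c (fun j => (c * x i)⁻¹ * x (i.succAbove j)) = ‖x‖⁻¹ • x := by
  have hP : chP i c (fun j => (c * x i)⁻¹ * x (i.succAbove j)) = (c * x i)⁻¹ • x := by
    ext k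
    rcases Fin.eq_self_or_eq_succAbove i k with rfl | ⟨j, rfl⟩
    · have : x k ≠ 0 := by rintro h; simp [h] at hx
      simp [chP]
      rcases hc with rfl | rfl <;> field_simp
    · simp [chP]
  have hx0 : x ≠ 0 := by rintro rfl; simp at hx
  have : ‖x‖ ≠ 0 := by simpa using hx0
  rw [chN, hP, norm_smul, norm_inv, Real.norm_eq_abs, abs_of_pos hx, smul_smul]
  congr 1
  have := hx.ne'
  rw [mul_inv, inv_inv, mul_right_comm, mul_inv_cancel₀ this, one_mul]

open scoped Pointwise ENNReal

lemma chart_bound (i : Fin 3) (c : ℝ) (hc : c = 1 ∨ c = -1) (A : Set E3) (hA : MeasurableSet A)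
    (hS : A ⊆ sphere 0 1) (hAc : ∀ x ∈ A, 1 / 2 < c * x i) :
    μH[2] A ≤ 1024 * volume (Set.Ioo (0:ℝ) 1 • A) := by
  set G := chN i c ⁻¹' A with hG
  have hGm : MeasurableSet G := (chN_lip i c hc).continuous.measurable hA
  have h1 : A ⊆ chN i c '' G := by
    intro x hx
    have hn : ‖x‖ = 1 := by simpa using hS hx
    have := chN_proj i c hc x (by linarith [hAc x hx])
    rw [hn, inv_one, one_smul] at this
    exact ⟨_, by rw [hG, Set.mem_preimage, this]; exact hx, this⟩
  have h2 : μH[2] A ≤ 16 * volume G := by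
    refine (measure_mono h1).trans (((chN_lip i c hc).hausdorffMeasure_image_le (by norm_num) G).trans ?_)
    have : (μH[2] : Measure (Fin 2 → ℝ)) = volume := by
      rw [← hausdorffMeasure_pi_real]; simp
    rw [this]
    gcongr
    rw [← ENNReal.coe_rpow_of_nonneg _ (by norm_num)]
    norm_num
  set K' : Set (ℝ × (Fin 2 → ℝ)) := {p | c * p.1 ∈ Set.Ioo (1/4:ℝ) (1/2) ∧ (c * p.1)⁻¹ • p.2 ∈ G} with hK'
  have hK'm : MeasurableSet K' := by
    apply MeasurableSet.inter
    · exact (measurable_const.mul measurable_fst) measurableSet_Ioo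
    · exact (((measurable_const.mul measurable_fst).inv).smul measurable_snd) hGm
  set e : E3 → ℝ × (Fin 2 → ℝ) := fun x => MeasurableEquiv.piFinSuccAbove (fun _ => ℝ) i (WithLp.ofLp x) with he
  have hem : MeasurePreserving e volume volume :=
    (volume_preserving_piFinSuccAbove (fun _ => ℝ) i).comp
      (EuclideanSpace.volume_preserving_symm_measurableEquiv_toLp (Fin 3))
  have h3 : e ⁻¹' K' ⊆ Set.Ioo (0:ℝ) 1 • A := by
    rintro x ⟨⟨ha, hb⟩, hx⟩
    have ha' : 1/4 < c * x i := ha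
    have hb' : c * x i < 1/2 := hb
    have hx' : chN i c (fun j => (c * x i)⁻¹ * x (i.succAbove j)) ∈ A := hx
    rw [chN_proj i c hc x (by linarith)] at hx'
    have hx0 : x ≠ 0 := by rintro rfl; simp at ha'; linarith
    have hn : 0 < ‖x‖ := by simpa using hx0
    have h5 := hAc _ hx'
    simp only [PiLp.smul_apply, smul_eq_mul] at h5
    have h6 : ‖x‖ < 1 := by
      have : c * (‖x‖⁻¹ * x i) = (c * x i) / ‖x‖ := by field_simp
      rw [this, lt_div_iff₀ hn] at h5
      linarith
    refine Set.mem_smul.2 ⟨‖x‖, ⟨hn, h6⟩, _, hx', ?_⟩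
    rw [smul_smul, mul_inv_cancel₀ hn.ne', one_smul]
  have h4 : volume G ≤ 64 * volume K' := by
    set I : Set ℝ := (fun a => c * a) ⁻¹' Set.Ioo (1/4:ℝ) (1/2) with hI
    have hIv : volume I = ENNReal.ofReal (1/4) := by
      rw [hI, Real.volume_preimage_mul_left (by rcases hc with rfl | rfl <;> norm_num)]
      rcases hc with rfl | rfl <;> norm_num
    have hIm : MeasurableSet I := (measurable_const.mul measurable_id) measurableSet_Ioo
    have : ENNReal.ofReal (1/16) * volume G * volume I ≤ volume K' := by
      rw [Measure.volume_eq_prod, Measure.prod_apply hK'm, ← setLIntegral_const]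
      refine le_trans ?_ (setLIntegral_le_lintegral I _)
      refine setLIntegral_mono' hIm fun a ha => ?_
      have hca : c * a ∈ Set.Ioo (1/4:ℝ) (1/2) := ha
      have : Prod.mk a ⁻¹' K' = (c * a) • G := by
        ext v
        rw [Set.mem_smul_set_iff_inv_smul_mem₀ (by linarith [hca.1])]
        simp only [hK', Set.mem_preimage, Set.mem_ofPred_eq, hca, true_and]
      rw [this, Measure.addHaar_smul]
      gcongr
      simp only [Module.finrank_fintype_fun_eq_card, Fintype.card_fin]
      rw [abs_of_nonneg (by positivity)]
      nlinarith [hca.1]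
    rw [hIv, mul_right_comm, ← ENNReal.ofReal_mul (by norm_num)] at this
    calc volume G = 64 * (ENNReal.ofReal (1/16 * (1/4)) * volume G) := by
          rw [← mul_assoc, show (64:ℝ≥0∞) = ENNReal.ofReal 64 by norm_num,
            ← ENNReal.ofReal_mul (by norm_num)]
          norm_num
      _ ≤ _ := by gcongr
  calc μH[2] A ≤ 16 * volume G := h2
    _ ≤ 16 * (64 * volume K') := by gcongr
    _ = 1024 * volume (e ⁻¹' K') := by
      rw [hem.measure_preimage hK'm.nullMeasurableSet, ← mul_assoc]; norm_num
    _ ≤ _ := by gcongr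

lemma haus_le (A : Set E3) (hA : MeasurableSet A) (hS : A ⊆ sphere 0 1) :
    μH[2] A ≤ 6144 * volume (Set.Ioo (0:ℝ) 1 • A) := by
  set B : Fin 3 → Bool → Set E3 := fun i b => A ∩ {x | 1/2 < (if b then 1 else -1 : ℝ) * x i} with hB
  have hBm : ∀ i b, MeasurableSet (B i b) := fun i b => by
    apply hA.inter
    apply measurableSet_lt measurable_const
    fun_prop
  have hcov : A ⊆ ⋃ i, ⋃ b, B i b := by
    intro x hx
    have hn : ‖x‖ = 1 := by simpa using hS hx
    have h2 : x 0 ^ 2 + x 1 ^ 2 + x 2 ^ 2 = 1 := by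
      have := EuclideanSpace.norm_sq_eq x
      rw [hn, Fin.sum_univ_three] at this
      simp at this; linarith
    have : ∃ i, 1/4 < x i ^ 2 := by
      by_contra! h
      linarith [h 0, h 1, h 2]
    obtain ⟨i, hi⟩ := this
    have : 1/2 < |x i| := by
      rw [← sq_abs] at hi
      nlinarith [abs_nonneg (x i)]
    simp only [Set.mem_iUnion]
    rcases lt_abs.1 this with h | h
    · exact ⟨i, true, hx, by simpa using h⟩
    · exact ⟨i, false, hx, by simpa using h⟩
  calc μH[2] A ≤ ∑ i, ∑ b, μH[2] (B i b) := by
        refine (measure_mono hcov).trans ((measure_iUnion_fintype_le _ _).trans ?_)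
        gcongr
        exact measure_iUnion_fintype_le _ _
    _ ≤ ∑ i : Fin 3, ∑ b : Bool, 1024 * volume (Set.Ioo (0:ℝ) 1 • A) := by
        gcongr with i _ b _
        refine (chart_bound i (if b then 1 else -1) (by cases b <;> simp) _ (hBm i b)
          (Set.inter_subset_left.trans hS) (fun x hx => hx.2)).trans ?_
        gcongr
        exact Set.inter_subset_left
    _ = _ := by simp; rw [← mul_assoc, ← mul_assoc]; norm_num

lemma comap_le : (μH[2] : Measure E3).comap (Subtype.val : sphere (0:E3) 1 → E3) ≤
    (2048 : ℝ≥0∞) • (volume : Measure E3).toSphere := by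
  refine Measure.le_iff.2 fun s hs => ?_
  have hemb : MeasurableEmbedding (Subtype.val : sphere (0:E3) 1 → E3) :=
    MeasurableEmbedding.subtype_coe isClosed_sphere.measurableSet
  rw [hemb.comap_apply, Measure.smul_apply, Measure.toSphere_apply' _ hs]
  refine (haus_le _ (hemb.measurableSet_image.2 hs) (by simp)).trans (le_of_eq ?_)
  simp only [finrank_euclideanSpace, Fintype.card_fin, smul_eq_mul]
  rw [← mul_assoc]; norm_num

lemma polar_le (H : E3 → ℝ≥0∞) (hH : Measurable H) :
    ∫⁻ ω in sphere (0:E3) 1, (∫⁻ t in Set.Ioi (0:ℝ), ENNReal.ofReal (t ^ 2) * H (t • ω)) ∂μH[2]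
      ≤ 2048 * ∫⁻ x, H x := by
  have hHp : Measurable (fun p : sphere (0:E3) 1 × Set.Ioi (0:ℝ) => H (p.2.1 • p.1.1)) := by
    fun_prop
  have e1 : ∫⁻ x, H x = ∫⁻ ω : sphere (0:E3) 1,
      (∫⁻ t in Set.Ioi (0:ℝ), ENNReal.ofReal (t ^ 2) * H (t • ω.1)) ∂(volume : Measure E3).toSphere := by
    calc ∫⁻ x, H x = ∫⁻ x : ({(0:E3)}ᶜ : Set E3), H x.1 ∂((volume : Measure E3).comap Subtype.val) := by
          rw [lintegral_subtype_comap (measurableSet_singleton _).compl,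
            restrict_compl_singleton]
      _ = ∫⁻ p : sphere (0:E3) 1 × Set.Ioi (0:ℝ), H (p.2.1 • p.1.1)
            ∂((volume : Measure E3).toSphere.prod (.volumeIoiPow (Module.finrank ℝ E3 - 1))) := by
          rw [← (volume : Measure E3).measurePreserving_homeomorphUnitSphereProd.lintegral_comp hHp]
          refine lintegral_congr fun x => ?_
          congr 1
          have : ‖x.1‖ ≠ 0 := norm_ne_zero_iff.2 x.2
          simp [smul_smul, this]
      _ = _ := by
          rw [lintegral_prod _ hHp.aemeasurable]
          refine lintegral_congr fun ω => ?_
          rw [Measure.volumeIoiPow, lintegral_withDensity_eq_lintegral_mul _ (by fun_prop) (by fun_prop)]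
          simp only [finrank_euclideanSpace, Fintype.card_fin, Pi.mul_apply]
          rw [← lintegral_subtype_comap measurableSet_Ioi]
  rw [e1, ← lintegral_subtype_comap isClosed_sphere.measurableSet, ← smul_eq_mul,
    ← lintegral_smul_measure]
  exact lintegral_mono' comap_le le_rfl

lemma sphere_scale (s : ℝ) (hs : 0 < s) (g : E3 → ℝ≥0∞) :
    ∫⁻ x in sphere (0:E3) s, g x ∂μH[2] =
      ENNReal.ofReal (s ^ 2) * ∫⁻ x in sphere (0:E3) 1, g (s • x) ∂μH[2] := by
  have hemb : MeasurableEmbedding (fun x : E3 => s • x) :=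
    (Homeomorph.smulOfNeZero s hs.ne').measurableEmbedding
  have : (μH[2] : Measure E3).restrict (sphere 0 s) =
      ENNReal.ofReal (s ^ 2) • ((μH[2] : Measure E3).restrict (sphere 0 1)).map (fun x => s • x) := by
    ext T hT
    rw [Measure.restrict_apply hT, Measure.smul_apply, hemb.map_apply,
      Measure.restrict_apply (hemb.measurable hT)]
    have : T ∩ sphere 0 s = s • ((fun x : E3 => s • x) ⁻¹' T ∩ sphere 0 1) := by
      ext x
      rw [Set.mem_smul_set_iff_inv_smul_mem₀ hs.ne']
      simp only [Set.mem_inter_iff, Set.mem_preimage, mem_sphere_zero_iff_norm, norm_smul, norm_inv,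
        smul_smul, mul_inv_cancel₀ hs.ne', one_smul, Real.norm_eq_abs, abs_of_pos hs]
      rw [inv_mul_eq_one₀ hs.ne']
      tauto
    rw [this, Measure.hausdorffMeasure_smul₀ (by norm_num) hs.ne', ENNReal.smul_def, smul_eq_mul, smul_eq_mul]
    congr 1
    rw [ENNReal.ofReal, ENNReal.coe_inj]
    ext
    simp [Real.coe_toNNReal _ (sq_nonneg s)]
  rw [this, lintegral_smul_measure, hemb.lintegral_map, smul_eq_mul]

lemma haus_sphere_lt_top : μH[2] (sphere (0:E3) 1) < ⊤ := by
  refine (haus_le _ isClosed_sphere.measurableSet le_rfl).trans_lt ?_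
  refine ENNReal.mul_lt_top (by norm_num) ?_
  refine (measure_mono ?_).trans_lt (measure_ball_lt_top (x := (0:E3)) (r := 1))
  rintro _ ⟨t, ht, x, hx, rfl⟩
  have : ‖x‖ = 1 := by simpa using hx
  simp [norm_smul, this, abs_of_pos ht.1, ht.2]

lemma haus_sphere_lt_top' (s : ℝ) (hs : 0 < s) : μH[2] (sphere (0:E3) s) < ⊤ := by
  have := sphere_scale s hs (fun _ => 1)
  simp only [lintegral_const, one_mul, Measure.restrict_apply_univ] at this
  rw [this]
  exact ENNReal.mul_lt_top (by simp) haus_sphere_lt_top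

lemma cs (a b : ℝ) (hab : a ≤ b) (g : ℝ → ℝ) (hg : ContinuousOn g (Set.Icc a b)) :
    (∫ t in a..b, g t) ^ 2 ≤ (b - a) * ∫ t in a..b, g t ^ 2 := by
  rcases hab.eq_or_lt with rfl | h
  · simp
  have hi : IntervalIntegrable g volume a b := (hg.mono (by rw [Set.uIcc_of_le hab])).intervalIntegrable
  have hi2 : IntervalIntegrable (fun t => g t ^ 2) volume a b :=
    ((hg.pow 2).mono (by rw [Set.uIcc_of_le hab])).intervalIntegrable
  set I := ∫ t in a..b, g t
  have h0 : 0 ≤ ∫ t in a..b, ((b - a) * g t - I) ^ 2 :=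
    intervalIntegral.integral_nonneg hab fun _ _ => sq_nonneg _
  have e : ∀ t, ((b - a) * g t - I) ^ 2 = (b-a)^2 * g t ^ 2 - (2 * (b - a) * I) * g t + I ^ 2 := fun t => by ring
  simp_rw [e] at h0
  rw [intervalIntegral.integral_add (by exact (hi2.const_mul _).sub (hi.const_mul _)) (by simp),
    intervalIntegral.integral_sub (hi2.const_mul _) (hi.const_mul _)] at h0
  simp only [intervalIntegral.integral_const_mul, intervalIntegral.integral_const, smul_eq_mul] at h0
  change 0 ≤ (b-a)^2 * _ - 2 * (b-a) * I * I + _ at h0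
  have hp : 0 < b - a := by linarith
  have : 0 ≤ (b - a) * ((b - a) * (∫ t in a..b, g t ^ 2) - I ^ 2) := by linarith
  have := nonneg_of_mul_nonneg_right this hp
  linarith

lemma norm_grad (f : E3 → ℝ) (x : E3) : ‖gradient f x‖ = ‖fderiv ℝ f x‖ := by
  simp [gradient]

def Hf (f : E3 → ℝ) (r : ℝ) : E3 → ℝ≥0∞ :=
  (ball (0:E3) r).indicator fun x => ENNReal.ofReal (‖gradient f x‖ ^ 2)

lemma Hf_meas (f : E3 → ℝ) (r : ℝ) : Measurable (Hf f r) := by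
  unfold Hf
  simp_rw [norm_grad]
  exact ((measurable_fderiv ℝ f).norm.pow_const 2).ennreal_ofReal.indicator measurableSet_ball

lemma pointwise (f : E3 → ℝ) (r s : ℝ) (hs : 0 < s) (hsr : s ≤ r)
    (hf : ContDiffOn ℝ 1 f (closedBall 0 r)) (ω : E3) (hω : ω ∈ sphere (0:E3) 1) :
    ENNReal.ofReal (s ^ 2) * ENNReal.ofReal (f (s • ω) ^ 2) ≤
      2 * (ENNReal.ofReal (r ^ 2) * ENNReal.ofReal (f (r • ω) ^ 2)) +
      ENNReal.ofReal (2 * (r - s)) * ∫⁻ t in Set.Ioi (0:ℝ), ENNReal.ofReal (t ^ 2) * Hf f r (t • ω) := by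
  have hn : ‖ω‖ = 1 := by simpa using hω
  have hr : 0 < r := hs.trans_le hsr
  have hud : UniqueDiffOn ℝ (closedBall (0:E3) r) :=
    uniqueDiffOn_convex (convex_closedBall _ _) (by
      rw [interior_closedBall _ hr.ne']; exact ⟨0, by simpa using hr⟩)
  have hmaps : Set.MapsTo (fun t : ℝ => t • ω) (Set.Icc s r) (closedBall 0 r) := by
    intro t ht
    have : 0 ≤ t := hs.le.trans ht.1
    simp [norm_smul, hn, abs_of_nonneg this, ht.2]
  have hray : ContinuousOn (fun t : ℝ => t • ω) (Set.Icc s r) := by fun_prop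
  set g' : ℝ → ℝ := fun t => fderivWithin ℝ f (closedBall 0 r) (t • ω) ω with hg'
  have hg'c : ContinuousOn g' (Set.Icc s r) :=
    ((hf.continuousOn_fderivWithin hud le_rfl).comp hray hmaps).clm_apply continuousOn_const
  have hball : ∀ t ∈ Set.Ioo s r, t • ω ∈ ball (0:E3) r := by
    intro t ht
    have : 0 ≤ t := hs.le.trans ht.1.le
    simp [norm_smul, hn, abs_of_nonneg this, ht.2]
  have hnhds : ∀ t ∈ Set.Ioo s r, closedBall (0:E3) r ∈ nhds (t • ω) := fun t ht =>
    Filter.mem_of_superset (isOpen_ball.mem_nhds (hball t ht)) ball_subset_closedBall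
  have hFTC : ∫ t in s..r, g' t = f (r • ω) - f (s • ω) := by
    refine intervalIntegral.integral_eq_sub_of_hasDerivAt_of_le (f := fun t : ℝ => f (t • ω)) hsr
      (hf.continuousOn.comp hray hmaps) (fun t ht => ?_)
      (hg'c.mono (by rw [Set.uIcc_of_le hsr])).intervalIntegrable
    have hd : HasFDerivAt f (fderivWithin ℝ f (closedBall 0 r) (t • ω)) (t • ω) := by
      rw [fderivWithin_of_mem_nhds (hnhds t ht)]
      exact ((hf.differentiableOn one_ne_zero).differentiableAt (hnhds t ht)).hasFDerivAt
    have h1 : HasDerivAt (fun t : ℝ => t • ω) ω t := by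
      simpa using (hasDerivAt_id t).smul_const ω
    exact hd.comp_hasDerivAt t h1
  have hcs := cs s r hsr g' hg'c
  rw [hFTC] at hcs
  have hreal : s ^ 2 * f (s • ω) ^ 2 ≤ 2 * (r ^ 2 * f (r • ω) ^ 2) +
      (2 * (r - s)) * ∫ t in s..r, s ^ 2 * g' t ^ 2 := by
    rw [intervalIntegral.integral_const_mul]
    set J := ∫ t in s..r, g' t ^ 2
    have h1 : f (s • ω) ^ 2 ≤ 2 * f (r • ω) ^ 2 + 2 * ((r - s) * J) := by
      nlinarith [sq_nonneg (2 * f (r • ω) - f (s • ω))]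
    have h2 : s ^ 2 ≤ r ^ 2 := by gcongr
    have h3 := mul_le_mul_of_nonneg_left h1 (sq_nonneg s)
    have h4 := mul_le_mul_of_nonneg_right h2 (sq_nonneg (f (r • ω)))
    linarith
  have hJint : ENNReal.ofReal (∫ t in s..r, s ^ 2 * g' t ^ 2) ≤
      ∫⁻ t in Set.Ioi (0:ℝ), ENNReal.ofReal (t ^ 2) * Hf f r (t • ω) := by
    have hc2 : ContinuousOn (fun t => s ^ 2 * g' t ^ 2) (Set.Icc s r) :=
      continuousOn_const.mul (hg'c.pow 2)
    rw [intervalIntegral.integral_of_le hsr, integral_Ioc_eq_integral_Ioo,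
      ofReal_integral_eq_lintegral_ofReal (hc2.integrableOn_Icc.mono_set Set.Ioo_subset_Icc_self)
        (Filter.Eventually.of_forall fun t => by positivity)]
    refine le_trans (setLIntegral_mono' measurableSet_Ioo fun t ht => ?_)
      (lintegral_mono_set (fun t ht => hs.trans ht.1))
    rw [Hf, Set.indicator_of_mem (hball t ht), ← ENNReal.ofReal_mul (by positivity), norm_grad]
    apply ENNReal.ofReal_le_ofReal
    have h1 : s ^ 2 ≤ t ^ 2 := by gcongr; exact ht.1.le
    have h2 : |g' t| ≤ ‖fderiv ℝ f (t • ω)‖ := by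
      simp only [hg']
      rw [fderivWithin_of_mem_nhds (hnhds t ht)]
      simpa [hn] using (fderiv ℝ f (t • ω)).le_opNorm ω
    have h3 : g' t ^ 2 ≤ ‖fderiv ℝ f (t • ω)‖ ^ 2 := by
      rw [← sq_abs]; gcongr
    gcongr
  calc _ = ENNReal.ofReal (s ^ 2 * f (s • ω) ^ 2) := by rw [ENNReal.ofReal_mul (by positivity)]
    _ ≤ _ := ENNReal.ofReal_le_ofReal hreal
    _ ≤ _ := ENNReal.ofReal_add_le
    _ ≤ _ := by
      gcongr
      · rw [ENNReal.ofReal_mul (by norm_num), ENNReal.ofReal_mul (by positivity)]; simp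
      · rw [ENNReal.ofReal_mul (by linarith)]
        gcongr

/-- Display (5.18): the supremum of the sphere integrals of `f²` over radii
`s ∈ [(1−ε)r, r]` is controlled by the outer sphere integral plus a gradient term. -/
theorem sup_sphere_integral_bound :
    ∃ κ : ℝ, 1 ≤ κ ∧
      ∀ r : ℝ, 0 < r → ∀ ε ∈ Set.Ioc (0:ℝ) (1 / 16),
        ∀ f : EuclideanSpace ℝ (Fin 3) → ℝ,
          ContDiffOn ℝ 1 f (Metric.closedBall 0 r) →
          ∀ s ∈ Set.Icc ((1 - ε) * r) r,
            (∫ x in Metric.sphere (0 : EuclideanSpace ℝ (Fin 3)) s, (f x) ^ 2 ∂μH[2]) ≤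
              κ * ((∫ x in Metric.sphere (0 : EuclideanSpace ℝ (Fin 3)) r, (f x) ^ 2 ∂μH[2]) +
                ε * r * ∫ x in Metric.ball (0 : EuclideanSpace ℝ (Fin 3)) r,
                  ‖gradient f x‖ ^ 2) := by
  refine ⟨4096, by norm_num, fun r hr ε hε f hf s hs => ?_⟩
  have hs0 : 0 < s := lt_of_lt_of_le (mul_pos (by linarith [hε.2]) hr) hs.1
  have hsub : ∀ t, t ≤ r → sphere (0:E3) t ⊆ closedBall 0 r := fun t ht =>
    sphere_subset_closedBall.trans (closedBall_subset_closedBall ht)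
  have hcont : ∀ t, t ≤ r → ContinuousOn (fun x => f x ^ 2) (sphere (0:E3) t) := fun t ht =>
    (hf.continuousOn.mono (hsub t ht)).pow 2
  have hintS : IntegrableOn (fun x => f x ^ 2) (sphere (0:E3) r) μH[2] := by
    obtain ⟨C, hC⟩ := (isCompact_sphere (0:E3) r).exists_bound_of_continuousOn (hcont r le_rfl)
    exact IntegrableOn.of_bound (haus_sphere_lt_top' r hr)
      ((hcont r le_rfl).aestronglyMeasurable isClosed_sphere.measurableSet)
      C ((ae_restrict_iff' isClosed_sphere.measurableSet).2 (Filter.Eventually.of_forall hC))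
  have hud : UniqueDiffOn ℝ (closedBall (0:E3) r) :=
    uniqueDiffOn_convex (convex_closedBall _ _) (by
      rw [interior_closedBall _ hr.ne']; exact ⟨0, by simpa using hr⟩)
  have hintB : IntegrableOn (fun x => ‖gradient f x‖ ^ 2) (ball (0:E3) r) volume := by
    have h1 : IntegrableOn (fun x => ‖fderivWithin ℝ f (closedBall 0 r) x‖ ^ 2) (ball (0:E3) r) volume :=
      (((hf.continuousOn_fderivWithin hud le_rfl).norm.pow 2).integrableOn_compact
        (isCompact_closedBall _ _)).mono_set ball_subset_closedBall
    refine h1.congr_fun (fun x hx => ?_) measurableSet_ball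
    simp only [norm_grad]
    rw [fderivWithin_of_mem_nhds
      (Filter.mem_of_superset (isOpen_ball.mem_nhds hx) ball_subset_closedBall)]
  have hHint : ∫⁻ x, Hf f r x = ENNReal.ofReal (∫ x in ball (0:E3) r, ‖gradient f x‖ ^ 2) := by
    rw [ofReal_integral_eq_lintegral_ofReal hintB (Filter.Eventually.of_forall fun t => by positivity)]
    unfold Hf
    rw [lintegral_indicator measurableSet_ball]
  have hSr : ∫⁻ x in sphere (0:E3) r, ENNReal.ofReal (f x ^ 2) ∂μH[2] =
      ENNReal.ofReal (∫ x in sphere (0:E3) r, f x ^ 2 ∂μH[2]) := by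
    rw [ofReal_integral_eq_lintegral_ofReal hintS (Filter.Eventually.of_forall fun t => by positivity)]
  have hQm : Measurable fun ω : E3 =>
      ∫⁻ t in Set.Ioi (0:ℝ), ENNReal.ofReal (t ^ 2) * Hf f r (t • ω) := by
    have hH := Hf_meas f r
    have : Measurable fun p : E3 × ℝ => ENNReal.ofReal (p.2 ^ 2) * Hf f r (p.2 • p.1) := by fun_prop
    exact this.lintegral_prod_right'
  have key : ∫⁻ x in sphere (0:E3) s, ENNReal.ofReal (f x ^ 2) ∂μH[2] ≤
      2 * (∫⁻ x in sphere (0:E3) r, ENNReal.ofReal (f x ^ 2) ∂μH[2]) +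
        ENNReal.ofReal (2 * (r - s)) * (2048 * ∫⁻ x, Hf f r x) := by
    rw [sphere_scale s hs0, sphere_scale r hr, ← lintegral_const_mul' _ _ ENNReal.ofReal_ne_top,
      ← lintegral_const_mul' _ _ ENNReal.ofReal_ne_top, ← lintegral_const_mul' _ _ ENNReal.ofNat_ne_top]
    refine (setLIntegral_mono' isClosed_sphere.measurableSet
      (pointwise f r s hs0 hs.2 hf)).trans ?_
    rw [lintegral_add_right _ (hQm.const_mul _), lintegral_const_mul' _ _ ENNReal.ofReal_ne_top]
    gcongr
    exact polar_le _ (Hf_meas f r)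
  rw [hHint, hSr] at key
  have hI1 : 0 ≤ ∫ x in sphere (0:E3) r, f x ^ 2 ∂μH[2] := integral_nonneg fun _ => sq_nonneg _
  have hI2 : 0 ≤ ∫ x in ball (0:E3) r, ‖gradient f x‖ ^ 2 := integral_nonneg fun _ => sq_nonneg _
  rw [integral_eq_lintegral_of_nonneg_ae (Filter.Eventually.of_forall fun t => by positivity)
    ((hcont s hs.2).aestronglyMeasurable isClosed_sphere.measurableSet)]
  have hrs : 0 ≤ r - s := by linarith [hs.2]
  generalize (∫⁻ x in sphere (0:E3) s, ENNReal.ofReal (f x ^ 2) ∂μH[2]) = X at key ⊢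
  generalize (∫ x in sphere (0:E3) r, f x ^ 2 ∂μH[2]) = Y at key hI1 ⊢
  generalize (∫ x in ball (0:E3) r, ‖gradient f x‖ ^ 2) = Z at key hI2 ⊢
  rw [show (2:ℝ≥0∞) = ENNReal.ofReal 2 by simp, show (2048:ℝ≥0∞) = ENNReal.ofReal 2048 by simp,
    ← ENNReal.ofReal_mul (by norm_num), ← ENNReal.ofReal_mul (by norm_num),
    ← ENNReal.ofReal_mul (by positivity), ← ENNReal.ofReal_add (by positivity) (by positivity)] at key
  refine (ENNReal.toReal_le_of_le_ofReal (by positivity) key).trans ?_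
  have h1 : r - s ≤ ε * r := by linarith [hs.1]
  have := mul_le_mul_of_nonneg_right h1 hI2
  linarith
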